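/- If τ = ib with b > 0 (a purely imaginary point of the upper half-plane), then 12 η₂(τ)² - τ² g₂(τ) > 0. -/

import Mathlib

noncomputable section
open scoped Real
open Complex

/-- The lattice point `m + nτ` of the lattice `ℤ + ℤτ`. -/
def latPt (τ : ℂ) (p : ℤ × ℤ) : ℂ := (p.1 : ℂ) + (p.2 : ℂ) * τ

/-- The Weierstrass zeta function of the lattice `ℤ + ℤτ`:
`ζ(z|τ) = 1/z + ∑'_{ω ≠ 0} (1/(z-ω) + 1/ω + z/ω²)`. -/
def wzeta (τ z : ℂ) : ℂ :=
  1 / z + ∑' p : {p : ℤ × ℤ // p ≠ 0},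
    (1 / (z - latPt τ p.1) + 1 / latPt τ p.1 + z / (latPt τ p.1) ^ 2)

/-- The quasi-period `η₁(τ) = 2ζ(ω₁/2|τ)`, with `ω₁ = 1`. -/
def eta1 (τ : ℂ) : ℂ := 2 * wzeta τ (1 / 2)

/-- The quasi-period `η₂(τ) = 2ζ(ω₂/2|τ)`, with `ω₂ = τ`. -/
def eta2 (τ : ℂ) : ℂ := 2 * wzeta τ (τ / 2)

/-- The Weierstrass invariant `g₂(τ) = 60 ∑'_{ω ∈ (ℤ+ℤτ) \ {0}} ω⁻⁴`. -/
def g2 (τ : ℂ) : ℂ := 60 * ∑' p : {p : ℤ × ℤ // p ≠ 0}, 1 / (latPt τ p.1) ^ 4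

/-!
The homogeneity of the lattice sums under `ℤ + ℤτ = τ (ℤ + ℤ(-1/τ))` turns `12 η₂(τ)² - τ² g₂(τ)`
into `τ⁻² (12 η₁(σ)² - g₂(σ))` with `σ = -1/τ`. Pairing `ω` with `-ω` in the series for `ζ(1/2)`
leaves the weight two Eisenstein summand plus a telescoping term, so `η₁ = G₂ = (π² / 3) E₂`, while
`g₂ = (4π⁴ / 3) E₄`. The Serre derivative of `E₂` is a level one modular form of weight four, hence
a multiple of `E₄`; comparing limits at `i∞` gives Ramanujan's identity `12 D E₂ = E₂² - E₄` with
`D = (2πi)⁻¹ d/dτ`, and therefore `12 η₁² - g₂ = 16 π⁴ D E₂`. On the imaginary axis `q` is positive,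
so `D E₂ = -24 ∑ m σ₁(m) qᵐ` is negative there, and so is `τ⁻²`.
-/

open UpperHalfPlane hiding I σ
open Derivative EisensteinSeries Filter Function Matrix.SpecialLinearGroup
open scoped ArithmeticFunction.sigma ComplexOrder Manifold MatrixGroups ModularForm Topology

local notation "𝕢" => Periodic.qParam

section InfiniteSum

lemma tsum_eq_add_tsum_ne {ι E : Type*} [AddCommGroup E] [UniformSpace E]
    [IsUniformAddGroup E] [CompleteSpace E] [T2Space E] {f : ι → E} (hf : Summable f) (i : ι) :
    ∑' j, f j = f i + ∑' j : {j // j ≠ i}, f j := by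
  rw [← hf.sum_add_tsum_subtype_compl {i}, Finset.sum_singleton]
  exact congrArg (f i + ·)
    ((Equiv.subtypeEquivRight fun j ↦ by simp).tsum_eq fun j : {j // j ≠ i} ↦ f j)

lemma tsum_int_sub_eq_zero {E : Type*} [AddCommGroup E] [TopologicalSpace E]
    [IsTopologicalAddGroup E] [T2Space E] {f : ℤ → E} (hf : Tendsto f cofinite (𝓝 0))
    (hs : Summable fun m ↦ f (m + 1) - f m) : ∑' m, (f (m + 1) - f m) = 0 := by
  rw [Int.cofinite_eq, tendsto_sup] at hf
  rw [← tsum_eq_of_summable_unconditional (L := SummationFilter.symmetricIco ℤ) hs]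
  refine HasSum.tsum_eq (SummationFilter.hasSum_symmetricIco_int_iff.mpr ?_)
  have htop := hf.2.comp tendsto_natCast_atTop_atTop
  have hbot := hf.1.comp (tendsto_neg_atTop_atBot.comp tendsto_natCast_atTop_atTop)
  convert! htop.sub hbot using 2 with N
  · simpa [neg_add_eq_sub] using Finset.sum_Ico_int_sub N (fun m ↦ -f m)
  · simp

lemma tendsto_inv_add_intCast_cofinite {𝕜 : Type*} [NormedField 𝕜] [NormSMulClass ℤ 𝕜] (w : 𝕜) :
    Tendsto (fun m : ℤ ↦ (w + m)⁻¹) cofinite (𝓝 0) := by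
  rw [Int.cofinite_eq]
  exact tendsto_inv₀_cobounded.comp
    ((tendsto_const_add_cobounded w).comp tendsto_intCast_atBot_sup_atTop_cobounded)

end InfiniteSum

section QSeries

variable {h : ℝ} {f : ℍ → ℂ} {c : ℕ → ℂ}

lemma tendsto_atImInfty_of_hasSum_qExpansion (hh : 0 < h)
    (hf : ∀ τ : ℍ, HasSum (fun m ↦ c m • 𝕢 h τ ^ m) (f τ)) :
    Tendsto f atImInfty (𝓝 (c 0)) := by
  set g : ℍ → ℂ := fun τ ↦ (f τ - c 0) / 𝕢 h τ with hg
  have hg_sum (τ : ℍ) : HasSum (fun m ↦ c (m + 1) • 𝕢 h τ ^ m) (g τ) := by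
    have hshift := ((hasSum_nat_add_iff' 1).mpr (hf τ)).div_const (𝕢 h τ)
    simpa [hg, pow_succ, ← mul_assoc, Periodic.qParam_ne_zero] using hshift
  have hg_bdd : IsBoundedUnder (· ≤ ·) atImInfty (norm ∘ g) :=
    (isBoundedAtImInfty_of_hasSum_qExpansion hh hg_sum).isBoundedUnder_le
  have hq : Tendsto (fun τ : ℍ ↦ 𝕢 h τ) atImInfty (𝓝 0) := qParam_tendsto_atImInfty hh
  have hlim : Tendsto (fun τ : ℍ ↦ c 0 + 𝕢 h τ * g τ) atImInfty (𝓝 (c 0)) := by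
    simpa using (hq.zero_mul_isBoundedUnder_le hg_bdd).const_add (c 0)
  refine hlim.congr fun τ ↦ ?_
  simp [hg, mul_div_cancel₀ _ (Periodic.qParam_ne_zero _)]

lemma norm_qParam_le_of_im_le (hh : 0 < h) {z w : ℂ} (hzw : z.im ≤ w.im) :
    ‖𝕢 h w‖ ≤ ‖𝕢 h z‖ := by
  rw [Periodic.norm_qParam, Periodic.norm_qParam, Real.exp_le_exp]
  exact div_le_div_of_nonneg_right
    (mul_le_mul_of_nonpos_left hzw (by linarith [Real.pi_pos])) hh.le

lemma hasDerivAt_qParam_pow (h : ℝ) (m : ℕ) (w : ℂ) :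
    HasDerivAt (fun z ↦ 𝕢 h z ^ m) (2 * π * I * (m / h) * 𝕢 h w ^ m) w := by
  simp only [Periodic.qParam, ← Complex.exp_nat_mul]
  convert! (((hasDerivAt_id w).const_mul (2 * π * I)).div_const (h : ℂ)).const_mul (m : ℂ)
    |>.cexp using 1
  simp only [id]
  ring

lemma hasSum_qExpansion_normalizedDerivOfComplex (hh : 0 < h)
    (hf : ∀ τ : ℍ, HasSum (fun m ↦ c m • 𝕢 h τ ^ m) (f τ)) (τ : ℍ) :
    HasSum (fun m ↦ (m / h * c m) • 𝕢 h τ ^ m) (D f τ) := by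
  let τ' : ℍ := ⟨τ / 2, by simpa using τ.im_pos⟩
  let U : Set ℂ := {w | (τ' : ℂ).im < w.im}
  have hU : IsOpen U := isOpen_lt continuous_const continuous_im
  have hτU : (τ : ℂ) ∈ U := by simpa [U, τ'] using half_lt_self τ.im_pos
  have hf_eq : f ∘ ofComplex =ᶠ[𝓝 (τ : ℂ)] fun w ↦ ∑' m, c m • 𝕢 h w ^ m := by
    filter_upwards [hU.mem_nhds hτU] with w hw
    have hw_pos : 0 < w.im := τ'.im_pos.trans hw
    simpa [ofComplex_apply_of_im_pos hw_pos] using (hf ⟨w, hw_pos⟩).tsum_eq.symm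
  have hterm (m : ℕ) (w : ℂ) : HasDerivAt (fun w ↦ c m • 𝕢 h w ^ m)
      (c m • (2 * π * I * (m / h) * 𝕢 h w ^ m)) w :=
    (hasDerivAt_qParam_pow h m w).const_smul (c m)
  have hbound (m : ℕ) (w : ℂ) (hw : w ∈ U) : ‖c m • 𝕢 h w ^ m‖ ≤ ‖c m • 𝕢 h τ' ^ m‖ := by
    rw [norm_smul, norm_smul, norm_pow, norm_pow]
    gcongr
    exact norm_qParam_le_of_im_le hh (le_of_lt hw)
  have hderiv := Complex.hasSum_deriv_of_summable_norm (hf τ').summable.norm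
    (fun m w _ ↦ (hterm m w).differentiableAt.differentiableWithinAt) hU hbound hτU
  rw [← hf_eq.deriv_eq] at hderiv
  convert! hderiv.mul_left (2 * π * I)⁻¹ using 2 with m
  rw [(hterm m τ).deriv, smul_eq_mul, smul_eq_mul]
  field

end QSeries

section Ramanujan

lemma hasDerivAt_D2_comp_ofComplex (γ : SL(2, ℤ)) (z : ℍ) :
    HasDerivAt (D2 γ ∘ ofComplex) (-2 * π * I * (γ 1 0 / denom γ z) ^ 2) z := by
  have hdenom := (hasDerivAt_denom_zpow γ (-1) z).const_mul (2 * π * I * γ 1 0)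
  refine (hdenom.congr_of_eventuallyEq ?_).congr_deriv ?_
  · filter_upwards [isOpen_upperHalfPlaneSet.mem_nhds z.im_pos] with w hw
    simp [D2, ofComplex_apply_of_im_pos hw, div_eq_mul_inv]
  · have hcoe : ((γ : GL (Fin 2) ℝ) 1 0 : ℂ) = γ 1 0 := by simp
    rw [hcoe]
    push_cast
    field

lemma mdifferentiable_D2 (γ : SL(2, ℤ)) : MDiff (D2 γ) := fun z ↦
  UpperHalfPlane.mdifferentiableAt_iff.mpr (hasDerivAt_D2_comp_ofComplex γ z).differentiableAt

lemma normalizedDerivOfComplex_D2 (γ : SL(2, ℤ)) (z : ℍ) :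
    D (D2 γ) z = -(γ 1 0 / denom γ z) ^ 2 := by
  rw [normalizedDerivOfComplex, (hasDerivAt_D2_comp_ofComplex γ z).deriv]
  field

lemma E2_slash_apply (γ : SL(2, ℤ)) (z : ℍ) :
    (E2 ∣[(2 : ℤ)] γ) z = E2 z - 6 * I / π * (γ 1 0 / denom γ z) := by
  simp only [E2_slash_action, Pi.sub_apply, Pi.smul_apply, D2, riemannZeta_two, smul_eq_mul]
  field

lemma normalizedDerivOfComplex_E2_slash (γ : SL(2, ℤ)) (z : ℍ) :
    D (E2 ∣[(2 : ℤ)] γ) z = D E2 z + 3 / π ^ 2 * (γ 1 0 / denom γ z) ^ 2 := by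
  have hD2 : MDiff ((1 / (2 * riemannZeta 2)) • D2 γ) := (mdifferentiable_D2 γ).const_smul _
  rw [E2_slash_action, normalizedDerivOfComplex_sub _ _ E2_mdifferentiable hD2,
    normalizedDerivOfComplex_smul _ _ (mdifferentiable_D2 γ), Pi.sub_apply, Pi.smul_apply,
    normalizedDerivOfComplex_D2, riemannZeta_two, smul_eq_mul]
  field

lemma slash_normalizedDerivOfComplex_E2 (γ : SL(2, ℤ)) (z : ℍ) :
    (D E2 ∣[(4 : ℤ)] γ) z = D E2 z - I / π * (γ 1 0 / denom γ z) * E2 z -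
      3 / π ^ 2 * (γ 1 0 / denom γ z) ^ 2 := by
  have hslash : D (E2 ∣[(2 : ℤ)] γ) z = (D E2 ∣[(4 : ℤ)] γ) z -
      2 * (2 * π * I)⁻¹ * (γ 1 0 / denom γ z) * (E2 ∣[(2 : ℤ)] γ) z :=
    congrFun (normalizedDerivOfComplex_SL_slash (k := 2) E2_mdifferentiable) z
  have hinv : 2 * (2 * π * I)⁻¹ = -(I / π) := by
    rw [mul_inv, inv_I]
    field
  rw [normalizedDerivOfComplex_E2_slash, E2_slash_apply, hinv] at hslash
  linear_combination -hslash + 6 / π ^ 2 * (γ 1 0 / denom γ z) ^ 2 * I_sq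

lemma serreDerivative_one_E2_slash (γ : SL(2, ℤ)) :
    serreDerivative 1 E2 ∣[(4 : ℤ)] γ = serreDerivative 1 E2 := by
  ext z
  have hsq : (serreDerivative 1 E2 ∣[(4 : ℤ)] γ) z =
      (D E2 ∣[(4 : ℤ)] γ) z - 12⁻¹ * (E2 ∣[(2 : ℤ)] γ) z ^ 2 := by
    grind [ModularForm.SL_slash_apply, serreDerivative_apply, Pi.mul_apply,
      congrFun (ModularForm.mul_slash_SL2 2 2 γ E2 E2) z]
  rw [hsq, slash_normalizedDerivOfComplex_E2, E2_slash_apply, serreDerivative_apply]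
  linear_combination (-3 / π ^ 2 * (γ 1 0 / denom γ z) ^ 2) * I_sq

lemma hasSum_qParam_pow_E2 (τ : ℍ) :
    HasSum (fun m : ℕ ↦ (if m = 0 then 1 else -24 * σ 1 m : ℂ) • 𝕢 1 τ ^ m) (E2 τ) := by
  simpa only [Periodic.qParam, ofReal_one, div_one] using hasSum_qExpansion_E2 (z := τ)

lemma hasSum_qParam_pow_normalizedDerivOfComplex_E2 (τ : ℍ) :
    HasSum (fun m : ℕ ↦ (-24 * m * σ 1 m : ℂ) • 𝕢 1 τ ^ m) (D E2 τ) := by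
  convert! hasSum_qExpansion_normalizedDerivOfComplex one_pos hasSum_qParam_pow_E2 τ using 3 with m
  rcases eq_or_ne m 0 with rfl | hm
  · simp
  · rw [if_neg hm, ofReal_one, div_one]
    ring

lemma tendsto_serreDerivative_one_E2_atImInfty :
    Tendsto (serreDerivative 1 E2) atImInfty (𝓝 (-1 / 12)) := by
  have hE2 : Tendsto E2 atImInfty (𝓝 1) := by
    simpa using tendsto_atImInfty_of_hasSum_qExpansion one_pos hasSum_qParam_pow_E2
  have hDE2 : Tendsto (D E2) atImInfty (𝓝 0) := by
    simpa using tendsto_atImInfty_of_hasSum_qExpansion one_pos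
      hasSum_qParam_pow_normalizedDerivOfComplex_E2
  convert! hDE2.sub ((hE2.const_mul (12⁻¹ : ℂ)).mul hE2) using 2
  · simp [serreDerivative_apply]
  · norm_num

/-- The Serre derivative `D E₂ - E₂² / 12` of the quasimodular form `E₂`, which is a genuine modular
form of weight `4` and level one. -/
def serreDerivativeE2 : ModularForm 𝒮ℒ 4 where
  toFun := serreDerivative 1 E2
  slash_action_eq' := fun _ ⟨γ, hγ⟩ ↦ hγ ▸ serreDerivative_one_E2_slash γ
  holo' := serreDerivative_mdifferentiable 1 E2_mdifferentiable
  bdd_at_cusps' {c} hc := by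
    rw [Subgroup.IsArithmetic.isCusp_iff_isCusp_SL2Z] at hc
    rw [OnePoint.isBoundedAt_iff_forall_SL2Z hc]
    intro γ _
    rw [serreDerivative_one_E2_slash γ]
    exact tendsto_serreDerivative_one_E2_atImInfty.isBigO_one ℝ

lemma tendsto_E₄_atImInfty : Tendsto ModularForm.E₄ atImInfty (𝓝 1) := by
  have hE₄ := tendsto_atImInfty_of_hasSum_qExpansion one_pos
    (ModularForm.hasSum_qExpansion ModularForm.E₄ one_pos (by simp))
  rwa [E_qExpansion_coeff_zero _ ⟨2, rfl⟩] at hE₄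

lemma serreDerivativeE2_eq_smul_E₄ : serreDerivativeE2 = (-1 / 12 : ℂ) • ModularForm.E₄ := by
  obtain ⟨c, hc⟩ := (finrank_eq_one_iff_of_nonzero' ModularForm.E₄ (E_ne_zero _ ⟨2, rfl⟩)).mp
    (Module.rank_eq_one_iff_finrank_eq_one.mp ModularForm.levelOne_weight_four_rank_one)
    serreDerivativeE2
  have hlim : Tendsto (serreDerivative 1 E2) atImInfty (𝓝 (c • 1)) := by
    convert! tendsto_E₄_atImInfty.const_smul c
    exact DFunLike.congr_fun hc.symm _
  have hc' : c • 1 = (-1 / 12 : ℂ) :=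
    tendsto_nhds_unique hlim tendsto_serreDerivative_one_E2_atImInfty
  rw [← hc, ← hc', smul_eq_mul, mul_one]

theorem ramanujan_normalizedDerivOfComplex_E2 (τ : ℍ) :
    D E2 τ = (E2 τ ^ 2 - ModularForm.E₄ τ) / 12 := by
  have h : serreDerivative 1 E2 τ = -1 / 12 * ModularForm.E₄ τ :=
    DFunLike.congr_fun serreDerivativeE2_eq_smul_E₄ τ
  rw [serreDerivative_apply] at h
  linear_combination h

end Ramanujan

section Lattice

lemma latPt_neg (τ : ℂ) (p : ℤ × ℤ) : latPt τ (-p) = -latPt τ p := by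
  simp only [latPt, Prod.fst_neg, Prod.snd_neg, Int.cast_neg]
  ring

lemma latPt_ne_zero (τ : ℍ) {p : ℤ × ℤ} (hp : p ≠ 0) : latPt τ p ≠ 0 := by
  have hcd : ![(p.2 : ℝ), p.1] ≠ 0 := by
    simpa [← Matrix.vec2_eq, Prod.ext_iff, and_comm] using hp
  simpa [latPt, add_comm] using τ.linear_ne_zero hcd

lemma eisSummand_eq_one_div_latPt_pow (k : ℕ) (τ : ℍ) (p : ℤ × ℤ) :
    eisSummand k ![p.2, p.1] τ = 1 / latPt τ p ^ k := by
  simp [eisSummand, latPt, add_comm]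

lemma summable_one_div_latPt_pow {k : ℕ} (hk : 3 ≤ k) (τ : ℍ) :
    Summable fun p ↦ 1 / latPt τ p ^ k := by
  simp_rw [← eisSummand_eq_one_div_latPt_pow]
  exact (Equiv.prodComm ℤ ℤ).summable_iff.mpr (summable_prod_eisSummand hk τ)

lemma tendsto_norm_latPt_cofinite (τ : ℍ) : Tendsto (‖latPt τ ·‖) cofinite atTop := by
  have hinj : Injective fun p : ℤ × ℤ ↦ ![p.2, p.1] :=
    (finTwoArrowEquiv ℤ).symm.injective.comp Prod.swap_injective
  have hnorm : Tendsto (fun v : Fin 2 → ℤ ↦ ‖v‖) cofinite atTop :=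
    tendsto_norm_comp_cofinite_atTop_of_isClosedEmbedding .id
  refine tendsto_atTop_mono' _ ?_
    ((hnorm.comp hinj.tendsto_cofinite).const_mul_atTop (r_pos τ))
  filter_upwards [eventually_cofinite_ne 0] with p hp
  have hv : ![p.2, p.1] ≠ 0 := by simpa using hinj.ne hp
  simpa [latPt, add_comm] using r_mul_max_le τ hv

/-- The summand of the Weierstrass zeta function `wzeta τ z` at the lattice point `latPt τ p`. At
`p = 0` the junk value `1 / 0 = 0` turns it into the principal part `1 / z`. -/
def zetaTerm (τ z : ℂ) (p : ℤ × ℤ) : ℂ :=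
  1 / (z - latPt τ p) + 1 / latPt τ p + z / latPt τ p ^ 2

lemma zetaTerm_zero (τ z : ℂ) : zetaTerm τ z 0 = 1 / z := by
  simp [zetaTerm, latPt]

lemma norm_zetaTerm_le {τ z : ℂ} {p : ℤ × ℤ} (hp : latPt τ p ≠ 0) (hz : 2 * ‖z‖ ≤ ‖latPt τ p‖) :
    ‖zetaTerm τ z p‖ ≤ 2 * ‖z‖ ^ 2 * ‖1 / latPt τ p ^ 3‖ := by
  rw [zetaTerm]
  set ω := latPt τ p
  have hω : 0 < ‖ω‖ := norm_pos_iff.mpr hp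
  have hdist : ‖ω‖ / 2 ≤ ‖z - ω‖ := by
    linarith [norm_sub_norm_le ω z, norm_sub_rev ω z]
  have hne : z - ω ≠ 0 := norm_pos_iff.mp ((half_pos hω).trans_le hdist)
  calc ‖1 / (z - ω) + 1 / ω + z / ω ^ 2‖ = ‖z‖ ^ 2 / (‖ω‖ ^ 2 * ‖z - ω‖) := by
        rw [← norm_pow, ← norm_pow, ← norm_mul, ← norm_div]
        congr 1
        field
    _ ≤ ‖z‖ ^ 2 / (‖ω‖ ^ 2 * (‖ω‖ / 2)) := by gcongr
    _ = 2 * ‖z‖ ^ 2 * ‖1 / ω ^ 3‖ := by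
        rw [norm_div, norm_pow, norm_one]
        field

lemma summable_zetaTerm (τ : ℍ) (z : ℂ) : Summable (zetaTerm τ z) := by
  refine .of_norm_bounded_eventually
    ((summable_one_div_latPt_pow le_rfl τ).norm.mul_left (2 * ‖z‖ ^ 2)) ?_
  filter_upwards [(tendsto_norm_latPt_cofinite τ).eventually_ge_atTop (2 * ‖z‖),
    eventually_cofinite_ne 0] with p hz hp using norm_zetaTerm_le (latPt_ne_zero τ hp) hz

lemma wzeta_eq_tsum_zetaTerm (τ : ℍ) (z : ℂ) : wzeta τ z = ∑' p, zetaTerm τ z p := by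
  rw [tsum_eq_add_tsum_ne (summable_zetaTerm τ z) 0, zetaTerm_zero]
  rfl

lemma zetaTerm_one_half_add_neg (τ : ℍ) (m n : ℤ) :
    zetaTerm τ (1 / 2) (m, n) + zetaTerm τ (1 / 2) (-(m, n)) =
      eisSummand 2 ![n, m] τ +
        ((n * τ + (m + 1 : ℤ) - 1 / 2 : ℂ)⁻¹ - (n * τ + m - 1 / 2 : ℂ)⁻¹) := by
  have h := eisSummand_eq_one_div_latPt_pow 2 τ (m, n)
  push_cast at h
  have hsub : (n * τ + m - 1 / 2 : ℂ) = -(1 / 2 - latPt τ (m, n)) := by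
    rw [latPt]
    ring
  have hadd : (n * τ + (m + 1 : ℤ) - 1 / 2 : ℂ) = 1 / 2 - -latPt τ (m, n) := by
    rw [latPt]
    push_cast
    ring
  rw [h, hsub, hadd, zetaTerm, zetaTerm, latPt_neg, inv_neg, neg_sq, div_neg]
  ring

lemma tsum_zetaTerm_one_half_add_neg (τ : ℍ) (n : ℤ)
    (hs : Summable fun m : ℤ ↦ zetaTerm τ (1 / 2) (m, n) + zetaTerm τ (1 / 2) (-(m, n))) :
    ∑' m : ℤ, (zetaTerm τ (1 / 2) (m, n) + zetaTerm τ (1 / 2) (-(m, n))) = e2Summand n τ := by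
  let f (m : ℤ) : ℂ := (n * τ + m - 1 / 2 : ℂ)⁻¹
  have hdiff (m : ℤ) : f (m + 1) - f m = zetaTerm τ (1 / 2) (m, n) +
      zetaTerm τ (1 / 2) (-(m, n)) - eisSummand 2 ![n, m] τ := by
    rw [zetaTerm_one_half_add_neg, add_sub_cancel_left]
  have hf : Tendsto f cofinite (𝓝 0) :=
    (tendsto_inv_add_intCast_cofinite (n * τ - 1 / 2 : ℂ)).congr fun m ↦ by rw [sub_add_eq_add_sub]
  have hsub := hs.sub (e2Summand_summable n τ)
  have htsum := hs.tsum_sub (e2Summand_summable n τ)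
  simp_rw [← hdiff] at hsub htsum
  rw [tsum_int_sub_eq_zero hf hsub] at htsum
  exact sub_eq_zero.mp htsum.symm

theorem eta1_eq_G2 (τ : ℍ) : eta1 τ = G2 τ := by
  have hs := summable_zetaTerm τ (1 / 2)
  have hneg : Summable fun p ↦ zetaTerm τ (1 / 2) (-p) := (Equiv.neg (ℤ × ℤ)).summable_iff.mpr hs
  have hpair : Summable fun p : ℤ × ℤ ↦ zetaTerm τ (1 / 2) p.swap + zetaTerm τ (1 / 2) (-p.swap) :=
    (Equiv.prodComm ℤ ℤ).summable_iff.mpr (hs.add hneg)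
  have hrow (n : ℤ) := tsum_zetaTerm_one_half_add_neg τ n (hpair.prod_factor n)
  have hcol : Summable fun n ↦ e2Summand n τ := hpair.prod.congr hrow
  calc eta1 τ = ∑' p, zetaTerm τ (1 / 2) p + ∑' p, zetaTerm τ (1 / 2) (-p) := by
        rw [eta1, wzeta_eq_tsum_zetaTerm, two_mul]
        exact congrArg (_ + ·) ((Equiv.neg (ℤ × ℤ)).tsum_eq _).symm
    _ = ∑' p : ℤ × ℤ, (zetaTerm τ (1 / 2) p.swap + zetaTerm τ (1 / 2) (-p.swap)) := by
        rw [← hs.tsum_add hneg]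
        exact ((Equiv.prodComm ℤ ℤ).tsum_eq _).symm
    _ = ∑' n, e2Summand n τ := by
        rw [hpair.tsum_prod]
        exact tsum_congr hrow
    _ = G2 τ := (tsum_eq_of_summable_unconditional hcol).symm

lemma eta1_eq_E2 (τ : ℍ) : eta1 τ = π ^ 2 / 3 * E2 τ := by
  rw [eta1_eq_G2, E2, Pi.smul_apply, riemannZeta_two, smul_eq_mul]
  field

lemma g2_eq_tsum_eisSummand (τ : ℍ) : g2 τ = 60 * ∑' v, eisSummand 4 v τ := by
  rw [g2, ← (finTwoArrowEquiv ℤ).symm.tsum_eq, ← (Equiv.prodComm ℤ ℤ).tsum_eq]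
  have h (p : ℤ × ℤ) : eisSummand 4 ((finTwoArrowEquiv ℤ).symm (Equiv.prodComm ℤ ℤ p)) τ =
      1 / latPt τ p ^ 4 := eisSummand_eq_one_div_latPt_pow 4 τ p
  simp_rw [h, tsum_eq_add_tsum_ne (summable_one_div_latPt_pow (k := 4) (by decide) τ) 0]
  simp [latPt]

lemma g2_eq_E₄ (τ : ℍ) : g2 τ = 4 * π ^ 4 / 3 * ModularForm.E₄ τ := by
  have hE₄ : ModularForm.E₄ τ = 1 / 2 * eisensteinSeries (N := 1) 0 4 τ := rfl
  have h := tsum_eisSummand_eq_riemannZeta_mul_eisensteinSeries (k := 4) (by decide) τ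
  push_cast at h
  rw [g2_eq_tsum_eisSummand, h, riemannZeta_four, hE₄]
  ring

end Lattice

section Inversion

/-- The rotation `(m, n) ↦ (n, -m)` of the index lattice, which corresponds to dividing the lattice
points of `ℤ + ℤτ` by `τ`. -/
def rotEquiv : ℤ × ℤ ≃+ ℤ × ℤ where
  toFun p := (p.2, -p.1)
  invFun p := (-p.2, p.1)
  left_inv p := by simp
  right_inv p := by simp
  map_add' p q := by simp [add_comm]

lemma tsum_ne_zero_rotEquiv {E : Type*} [AddCommMonoid E] [TopologicalSpace E] (f : ℤ × ℤ → E) :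
    ∑' p : {p : ℤ × ℤ // p ≠ 0}, f (rotEquiv p) = ∑' p : {p : ℤ × ℤ // p ≠ 0}, f p :=
  (rotEquiv.toEquiv.subtypeEquiv (p := (· ≠ 0)) (q := (· ≠ 0)) fun _ ↦
    (map_ne_zero_iff rotEquiv rotEquiv.injective).symm).tsum_eq fun p ↦ f p

lemma latPt_eq_mul_latPt_rotEquiv {τ : ℂ} (hτ : τ ≠ 0) (p : ℤ × ℤ) :
    latPt τ p = τ * latPt (-τ⁻¹) (rotEquiv p) := by
  have hrot : rotEquiv p = (p.2, -p.1) := rfl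
  simp only [latPt, hrot, Int.cast_neg]
  field

lemma zetaTerm_mul {τ : ℂ} (hτ : τ ≠ 0) (z : ℂ) (p : ℤ × ℤ) :
    zetaTerm τ (τ * z) p = τ⁻¹ * zetaTerm (-τ⁻¹) z (rotEquiv p) := by
  rw [zetaTerm, zetaTerm, latPt_eq_mul_latPt_rotEquiv hτ, ← mul_sub]
  field

lemma wzeta_mul {τ : ℂ} (hτ : τ ≠ 0) (z : ℂ) : wzeta τ (τ * z) = τ⁻¹ * wzeta (-τ⁻¹) z := calc
  wzeta τ (τ * z) = 1 / (τ * z) + ∑' p : {p : ℤ × ℤ // p ≠ 0}, zetaTerm τ (τ * z) p := rfl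
  _ = τ⁻¹ * (1 / z + ∑' p : {p : ℤ × ℤ // p ≠ 0}, zetaTerm (-τ⁻¹) z p) := by
    simp_rw [zetaTerm_mul hτ, tsum_mul_left, tsum_ne_zero_rotEquiv (zetaTerm (-τ⁻¹) z)]
    field
  _ = τ⁻¹ * wzeta (-τ⁻¹) z := rfl

lemma eta2_eq_inv_mul_eta1 {τ : ℂ} (hτ : τ ≠ 0) : eta2 τ = τ⁻¹ * eta1 (-τ⁻¹) := by
  rw [eta2, eta1, div_eq_mul_one_div, wzeta_mul hτ, mul_left_comm]

lemma g2_eq_inv_pow_mul_g2 {τ : ℂ} (hτ : τ ≠ 0) : g2 τ = (τ ^ 4)⁻¹ * g2 (-τ⁻¹) := by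
  have h (p : {p : ℤ × ℤ // p ≠ 0}) :
      1 / latPt τ p ^ 4 = (τ ^ 4)⁻¹ * (1 / latPt (-τ⁻¹) (rotEquiv p) ^ 4) := by
    rw [latPt_eq_mul_latPt_rotEquiv hτ, mul_pow, one_div, one_div, mul_inv]
  simp_rw [g2, h, tsum_mul_left, tsum_ne_zero_rotEquiv fun p ↦ 1 / latPt (-τ⁻¹) p ^ 4]
  exact mul_left_comm _ _ _

end Inversion

section ImaginaryAxis

theorem twelve_mul_eta1_sq_sub_g2 (τ : ℍ) : 12 * eta1 τ ^ 2 - g2 τ = 16 * π ^ 4 * D E2 τ := by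
  rw [eta1_eq_E2, g2_eq_E₄, ramanujan_normalizedDerivOfComplex_E2]
  ring

theorem twelve_mul_eta2_sq_sub_sq_mul_g2 (τ : ℍ) :
    12 * eta2 τ ^ 2 - τ ^ 2 * g2 τ = 16 * π ^ 4 / τ ^ 2 * D E2 (ModularGroup.S • τ) := by
  have hτ : (τ : ℂ) ≠ 0 := τ.ne_zero
  have hS : -(τ : ℂ)⁻¹ = ↑(ModularGroup.S • τ) := by
    simp only [modular_S_smul, coe_mk, inv_neg]
  have h := twelve_mul_eta1_sq_sub_g2 (ModularGroup.S • τ)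
  rw [eta2_eq_inv_mul_eta1 hτ, g2_eq_inv_pow_mul_g2 hτ, hS]
  linear_combination (norm := skip) (τ : ℂ)⁻¹ ^ 2 * h
  field

lemma qParam_pos_of_re_eq_zero (h : ℝ) {z : ℂ} (hz : z.re = 0) : 0 < 𝕢 h z := by
  have hq : 𝕢 h z = (Real.exp (-2 * π * z.im / h) : ℝ) := by
    have hz' : z = z.im * I := by simpa [hz] using (re_add_im z).symm
    rw [Periodic.qParam, ofReal_exp]
    congr 1
    push_cast
    linear_combination (2 * π * I / h) * hz' + (2 * π * z.im / h) * I_sq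
  rw [hq]
  exact_mod_cast Real.exp_pos _

lemma normalizedDerivOfComplex_E2_neg {τ : ℍ} (hτ : τ.re = 0) : D E2 τ < 0 := by
  have hq : 0 < 𝕢 1 τ := qParam_pos_of_re_eq_zero 1 hτ
  have hle (m : ℕ) : (-24 * m * σ 1 m : ℂ) • 𝕢 1 τ ^ m ≤ 0 := by
    rw [smul_eq_mul, neg_mul, neg_mul, neg_mul, neg_nonpos]
    positivity
  have hlt : (-24 * (1 : ℕ) * σ 1 1 : ℂ) • 𝕢 1 τ ^ 1 < 0 := by
    simpa using hq
  exact hasSum_lt hle hlt (hasSum_qParam_pow_normalizedDerivOfComplex_E2 τ) hasSum_zero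

theorem twelve_mul_eta2_sq_sub_sq_mul_g2_pos {τ : ℍ} (hτ : τ.re = 0) :
    0 < 12 * eta2 τ ^ 2 - τ ^ 2 * g2 τ := by
  have hS : (ModularGroup.S • τ).re = 0 := by
    rw [modular_S_smul, ← coe_re, coe_mk]
    simp [hτ]
  have hsq : (τ : ℂ) ^ 2 = -(τ.im ^ 2 : ℝ) := by
    rw [← re_add_im (τ : ℂ), coe_re, coe_im, hτ]
    push_cast
    linear_combination (τ.im ^ 2 : ℂ) * I_sq
  have him : (0 : ℂ) < (τ.im ^ 2 : ℝ) := mod_cast pow_pos τ.im_pos 2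
  have hπ : (0 : ℂ) < π := mod_cast Real.pi_pos
  rw [twelve_mul_eta2_sq_sub_sq_mul_g2, hsq]
  have hD := normalizedDerivOfComplex_E2_neg hS
  refine mul_pos_of_neg_of_neg ?_ hD
  rw [div_neg, neg_lt_zero]
  exact div_pos (mul_pos (by norm_num) (pow_pos hπ 4)) him

end ImaginaryAxis

/-- For purely imaginary `τ = ib` with `b > 0`, the quantity `12 η₂(τ)² - τ² g₂(τ)`
is real and positive. -/
theorem stmt_12 (b : ℝ) (hb : 0 < b) :
    (12 * eta2 (Complex.I * b) ^ 2 - (Complex.I * b) ^ 2 * g2 (Complex.I * b)).im = 0 ∧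
      0 < (12 * eta2 (Complex.I * b) ^ 2 - (Complex.I * b) ^ 2 * g2 (Complex.I * b)).re := by
  let τ : ℍ := ⟨Complex.I * b, by simpa using hb⟩
  have hτ : τ.re = 0 := by simp [τ, ← coe_re]
  obtain ⟨hre, him⟩ := Complex.pos_iff.mp (twelve_mul_eta2_sq_sub_sq_mul_g2_pos hτ)
  exact ⟨him.symm, hre⟩
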